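/- Let B, a, ε, D, z be as in the gain-design setup, and let k_d ∈ ℝ³ with k_{d,i} ≥ 0 for all i satisfy (I − D)k_d = z. Let Ξ be any 3×3 real matrix with |Ξ_ij| ≤ B_ij for all i, j, and let ι ∈ ℝ³ satisfy |ι_i| ≤ a_i for all i. Then for every k ∈ ℝ³ with 0 ≤ k_i ≤ k_{d,i} for all i, and every i ∈ {1,2,3}: −(1 + Ξ_ii)·k_i + Σ_{j≠i} |Ξ_ij|·k_j + |ι_i| + (1 − B_ii)·(k_i − k_{d,i}) ≤ −ε_i. -/

import Mathlib

open Matrix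

/-!
The matrix `D` is the Jacobi iteration matrix of `1 - B`, so multiplying the static equation
`(1 - D) k_d = z` by the positive diagonal of `1 - B` turns it into `(1 - B) k_d = a + ε`. Row `i`
of the left-hand side of the inequality can only increase when `Ξ i i` is replaced by `-B i i`,
`|ι i|` by `a i` and, for `j ≠ i`, `|Ξ i j|` by `B i j` and `k j` by `k_d j`. The terms in `k i`
then cancel, and what remains is `a i - ((1 - B) k_d) i = -ε i`.
-/

section Jacobi

variable {n K : Type*} [DecidableEq n] [Field K]

/-- The iteration matrix `-L⁻¹ (A - L)` of Jacobi's method for the linear system `A x = b`, where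
`L` is the diagonal part of `A`. It relates the static gain matrix `D` to `1 - B`. Rows with
`A i i = 0` are zero, because `x / 0 = 0`. -/
def jacobiMatrix (A : Matrix n n K) : Matrix n n K :=
  of fun i j => if i = j then 0 else -A i j / A i i

theorem jacobiMatrix_one_sub_apply (B : Matrix n n K) (i j : n) :
    jacobiMatrix (1 - B) i j = if i = j then 0 else B i j / (1 - B i i) := by
  by_cases hij : i = j <;> simp [jacobiMatrix, hij]

variable {A : Matrix n n K} {i : n}

theorem diag_mul_one_sub_jacobiMatrix_apply (hA : A i i ≠ 0) (j : n) :
    A i i * (1 - jacobiMatrix A) i j = A i j := by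
  by_cases hij : i = j
  · subst hij
    simp [jacobiMatrix]
  · simp [jacobiMatrix, hij, neg_div, mul_div_cancel₀ _ hA]

variable [Fintype n]

theorem diag_mul_one_sub_jacobiMatrix_mulVec (hA : A i i ≠ 0) (v : n → K) :
    A i i * ((1 - jacobiMatrix A) *ᵥ v) i = (A *ᵥ v) i := by
  simp only [mulVec, dotProduct, Finset.mul_sum, ← mul_assoc,
    diag_mul_one_sub_jacobiMatrix_apply hA]

theorem div_diag_le_one_sub_jacobiMatrix_mulVec_iff [LinearOrder K] [IsStrictOrderedRing K]
    (hA : 0 < A i i) (b : K) (v : n → K) :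
    b / A i i ≤ ((1 - jacobiMatrix A) *ᵥ v) i ↔ b ≤ (A *ᵥ v) i := by
  rw [div_le_iff₀' hA, diag_mul_one_sub_jacobiMatrix_mulVec hA.ne']

end Jacobi

theorem one_sub_mulVec_apply_eq_sub_sum_erase {n R : Type*} [Fintype n] [DecidableEq n] [Ring R]
    (B : Matrix n n R) (v : n → R) (i : n) :
    ((1 - B) *ᵥ v) i = (1 - B i i) * v i - ∑ j ∈ Finset.univ.erase i, B i j * v j := by
  rw [sub_mulVec, one_mulVec, Pi.sub_apply, mulVec, dotProduct,
    ← Finset.add_sum_erase _ _ (Finset.mem_univ i)]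
  noncomm_ring

theorem perturbed_row_le_neg_one_sub_mulVec {n R : Type*} [Fintype n] [DecidableEq n]
    [CommRing R] [LinearOrder R] [IsStrictOrderedRing R] {B Ξ : Matrix n n R} {k kd : n → R}
    {i : n} (hΞ : ∀ j, |Ξ i j| ≤ B i j) (hk : ∀ j, 0 ≤ k j ∧ k j ≤ kd j) :
    -(1 + Ξ i i) * k i + (∑ j ∈ Finset.univ.erase i, |Ξ i j| * k j)
        + (1 - B i i) * (k i - kd i)
      ≤ -((1 - B) *ᵥ kd) i := by
  have diagonal_le : -Ξ i i * k i ≤ B i i * k i :=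
    mul_le_mul_of_nonneg_right ((neg_le_abs _).trans (hΞ i)) (hk i).1
  have off_diagonal_le : ∑ j ∈ Finset.univ.erase i, |Ξ i j| * k j
      ≤ ∑ j ∈ Finset.univ.erase i, B i j * kd j :=
    Finset.sum_le_sum fun j _ =>
      mul_le_mul (hΞ j) (hk j).2 (hk j).1 ((abs_nonneg _).trans (hΞ j))
  rw [one_sub_mulVec_apply_eq_sub_sum_erase]
  linarith

theorem stmt_7_general {n K : Type*} [Fintype n] [DecidableEq n]
    [Field K] [LinearOrder K] [IsStrictOrderedRing K]
    (B : Matrix n n K) (a ε : n → K) (hBii : ∀ i, B i i < 1)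
    (D : Matrix n n K) (hD : ∀ i j, D i j = if i = j then 0 else B i j / (1 - B i i))
    (z : n → K) (hz : ∀ i, z i = (a i + ε i) / (1 - B i i))
    (kd : n → K) (hsol : z ≤ (1 - D) *ᵥ kd)
    (Ξ : Matrix n n K) (hΞ : ∀ i j, |Ξ i j| ≤ B i j)
    (ι : n → K) (hι : ∀ i, |ι i| ≤ a i)
    (k : n → K) (hk : ∀ i, 0 ≤ k i ∧ k i ≤ kd i) (i : n) :
    -(1 + Ξ i i) * k i + (∑ j ∈ Finset.univ.erase i, |Ξ i j| * k j) + |ι i|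
        + (1 - B i i) * (k i - kd i)
      ≤ -ε i := by
  have D_eq : D = jacobiMatrix (1 - B) := by
    ext i j
    rw [hD, jacobiMatrix_one_sub_apply]
  have diag_eq : (1 - B) i i = 1 - B i i := by rw [Matrix.sub_apply, one_apply_eq]
  have diag_pos : 0 < (1 - B) i i := diag_eq ▸ sub_pos.mpr (hBii i)
  have add_le_mulVec : a i + ε i ≤ ((1 - B) *ᵥ kd) i := by
    rw [← div_diag_le_one_sub_jacobiMatrix_mulVec_iff diag_pos, diag_eq, ← hz, ← D_eq]
    exact hsol i
  linarith [perturbed_row_le_neg_one_sub_mulVec (hΞ i) hk, hι i]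

/-- Per-axis inequality in the proof of Theorem 2 (adaptive gain SMC): if the
static gains `k_d` solve `(I - D) k_d = z` and the adaptive gains satisfy
`0 ≤ k i ≤ k_d i`, then for admissible uncertainties `Ξ`, `ι`,
`-(1 + Ξ i i) k i + ∑_{j ≠ i} |Ξ i j| k j + |ι i| + (1 - B i i)(k i - k_d i)
  ≤ -ε i` for every axis `i`. -/
theorem stmt_7 (B : Matrix (Fin 3) (Fin 3) ℝ) (a ε : Fin 3 → ℝ)
    (hB : ∀ i j, 0 ≤ B i j) (hBii : ∀ i, B i i < 1)
    (ha : ∀ i, 0 ≤ a i) (hε : ∀ i, 0 < ε i)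
    (D : Matrix (Fin 3) (Fin 3) ℝ)
    (hD : ∀ i j, D i j = if i = j then 0 else B i j / (1 - B i i))
    (z : Fin 3 → ℝ) (hz : ∀ i, z i = (a i + ε i) / (1 - B i i))
    (kd : Fin 3 → ℝ) (hkd : ∀ i, 0 ≤ kd i) (hsol : (1 - D).mulVec kd = z)
    (Ξ : Matrix (Fin 3) (Fin 3) ℝ) (hΞ : ∀ i j, |Ξ i j| ≤ B i j)
    (ι : Fin 3 → ℝ) (hι : ∀ i, |ι i| ≤ a i) :
    ∀ k : Fin 3 → ℝ, (∀ i, 0 ≤ k i ∧ k i ≤ kd i) →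
      ∀ i, -(1 + Ξ i i) * k i + (∑ j ∈ Finset.univ.erase i, |Ξ i j| * k j) + |ι i|
          + (1 - B i i) * (k i - kd i)
        ≤ -ε i := by
  exact stmt_7_general B a ε hBii D hD z hz kd hsol.ge Ξ hΞ ι hι
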